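/- (Closed form for bumpered billiard tables B1(5,n), even case.) For every even n ≥ 4 and all signs e ∈ {1,-1}^(2n-2): BT_n(e₁,…,e_{2n-2}) = g₂(e₁,e₂)·∏_{m=1}^{(n-2)/2} N(e_{4m-1},e_{4m},e_{4m+1},e_{4m+2}) + Σ_{i=0}^{(n-4)/2} H_{n-1-2i}(e₁,…,e_{2n-4-4i})·X(e_{2n-3-4i},e_{2n-2-4i})·∏_{m=1}^{i} N(e_{2n-1-4i+4(m-1)},e_{2n-4i+4(m-1)},e_{2n+1-4i+4(m-1)},e_{2n+2-4i+4(m-1)}) + Σ_{i=0}^{(n-4)/2} H_{n-2-2i}(e₁,…,e_{2n-6-4i})·R(e_{2n-5-4i},e_{2n-4-4i},e_{2n-3-4i},e_{2n-2-4i})·∏_{m=1}^{i} N(e_{2n-1-4i+4(m-1)},e_{2n-4i+4(m-1)},e_{2n+1-4i+4(m-1)},e_{2n+2-4i+4(m-1)}). -/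

import Mathlib

/-!
For even `n` the defining recursion reads `BT n = P + BT (n-2) * N`, where
`P = H (n-1) * X + H (n-2) * R`; this includes `n = 4`, with `BT 2 = g₂` as initial value
(`BTb_even_step`). It is a first-order linear recurrence in `k = (n-2)/2`, and the closed form is
its unrolled solution (`linear_recurrence_closed_form`), with each `P` split into its `X`-part and
its `R`-part.
-/

open LaurentPolynomial Finset

noncomputable section

/-- The ring `ℤ[A, A⁻¹]` of Laurent polynomials over `ℤ`; the variable `A` is
`LaurentPolynomial.T 1`, and `A^n = T n` for `n : ℤ`. -/
abbrev KR : Type := LaurentPolynomial ℤ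

/-- `a ε = A^ε`. -/
def Ca (ε : ℤ) : KR := T ε

/-- `f₂ ε = -A^(-3ε)`. -/
def Cf₂ (ε : ℤ) : KR := -T (-3 * ε)

/-- `δ = -A² - A⁻²`. -/
def Cδ : KR := -T 2 - T (-2)

/-- `X(α,β) = δ·a(α)a(β) + a(α)a(-β) + a(-α)a(β)`. -/
def CX (α β : ℤ) : KR := Cδ * Ca α * Ca β + Ca α * Ca (-β) + Ca (-α) * Ca β

/-- `g₂(α,β) = X(α,β) + δ·a(-α)a(-β)`, the Kauffman bracket of `T(4,2)`. -/
def Cg₂ (α β : ℤ) : KR := CX α β + Cδ * Ca (-α) * Ca (-β)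

/-- `K(α,β,γ,η) = f₂(-α)f₂(-β)a(-γ)a(-η)`. -/
def CK (α β γ η : ℤ) : KR := Cf₂ (-α) * Cf₂ (-β) * Ca (-γ) * Ca (-η)

/-- `N(α,β,γ,η) = f₂(-α)a(-β)a(-γ)a(-η)`. -/
def CN (α β γ η : ℤ) : KR := Cf₂ (-α) * Ca (-β) * Ca (-γ) * Ca (-η)

/-- `Ñ(α,β,γ,η) = a(-α)f₂(-β)a(-γ)a(-η)`. -/
def CNt (α β γ η : ℤ) : KR := Ca (-α) * Cf₂ (-β) * Ca (-γ) * Ca (-η)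

/-- `R(α,β,γ,η) = f₂(-α)a(β)a(-γ)a(-η)`. -/
def CR (α β γ η : ℤ) : KR := Cf₂ (-α) * Ca β * Ca (-γ) * Ca (-η)

/-- `R̃(α,β,γ,η) = a(α)f₂(-β)a(-γ)a(-η)`. -/
def CRt (α β γ η : ℤ) : KR := Ca α * Cf₂ (-β) * Ca (-γ) * Ca (-η)

/-- `S(α,β,γ,η) = f₂(α)f₂(-β)a(-γ)a(-η)`. -/
def CS (α β γ η : ℤ) : KR := Cf₂ α * Cf₂ (-β) * Ca (-γ) * Ca (-η)

/-- `L(α,β,γ) = f₂(-α)a(β)a(-γ)`. -/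
def CL (α β γ : ℤ) : KR := Cf₂ (-α) * Ca β * Ca (-γ)

/-- `M(α,β,γ) = f₂(-α)f₂(β)a(-γ)`. -/
def CM (α β γ : ℤ) : KR := Cf₂ (-α) * Cf₂ β * Ca (-γ)

mutual
  /-- `H n e` is the Kauffman bracket of the Chebyshev billiard table diagram `T(5,n)`
  with crossing signs `e 1, …, e (2n-2)`. -/
  def Hb : ℕ → (ℕ → ℤ) → KR
    | 0, _ => 1
    | 1, _ => 1
    | 2, e =>
        Ca (e 1) * Ca (e 2) + Cδ * Ca (e 1) * Ca (-e 2) + Cδ * Ca (-e 1) * Ca (e 2)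
          + Cδ ^ 2 * Ca (-e 1) * Ca (-e 2)
    | m + 3, e =>
        Hb (m + 2) e * Ca (e (2 * m + 3)) * Ca (e (2 * m + 4))
          + Hb (m + 1) e * CK (e (2 * m + 1)) (e (2 * m + 2)) (e (2 * m + 3)) (e (2 * m + 4))
          + if (m + 3) % 2 = 1 then
              BTb (m + 2) e * Ca (e (2 * m + 3)) * Ca (-e (2 * m + 4))
                + Bb (m + 2) (Function.update e (2 * m + 1) (e (2 * m + 2)))
                    * Cf₂ (-e (2 * m + 1)) * Ca (-e (2 * m + 3)) * Ca (e (2 * m + 4))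
            else
              BTb (m + 2) e * Ca (-e (2 * m + 3)) * Ca (e (2 * m + 4))
                + Bb (m + 2) e * Cf₂ (-e (2 * m + 2)) * Ca (e (2 * m + 3)) * Ca (-e (2 * m + 4))
  termination_by n _ => n

  /-- `B n e` is the Kauffman bracket of the bumpered billiard table `B2(5,n)` with
  crossing signs `e 1, …, e (2n-3)`. -/
  def Bb : ℕ → (ℕ → ℤ) → KR
    | 0, _ => 1
    | 1, _ => 1
    | 2, e => Cf₂ (e 1)
    | m + 3, e =>
        Hb (m + 2) e * Ca (e (2 * m + 3))
          + if (m + 3) % 2 = 1 then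
              Bb (m + 2) (Function.update e (2 * m + 1) (e (2 * m + 2)))
                * Cf₂ (-e (2 * m + 1)) * Ca (-e (2 * m + 3))
            else
              Bb (m + 2) e * Cf₂ (-e (2 * m + 2)) * Ca (-e (2 * m + 3))
  termination_by n _ => n

  /-- `BT n e` is the Kauffman bracket of the bumpered billiard table `B1(5,n)` with its
  crossingless tangle closure, with crossing signs `e 1, …, e (2n-2)`. -/
  def BTb : ℕ → (ℕ → ℤ) → KR
    | 0, _ => 1
    | 1, _ => 1
    | 2, e => Cg₂ (e 1) (e 2)
    | 3, e => Hb 2 e * CX (e 3) (e 4) + CS (e 1) (e 2) (e 3) (e 4)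
    | 4, e =>
        Hb 3 e * CX (e 5) (e 6) + Hb 2 e * CR (e 3) (e 4) (e 5) (e 6)
          + Cg₂ (e 1) (e 2) * CN (e 3) (e 4) (e 5) (e 6)
    | m + 5, e =>
        Hb (m + 4) e * CX (e (2 * m + 7)) (e (2 * m + 8))
          + if (m + 5) % 2 = 1 then
              Hb (m + 3) e * CRt (e (2 * m + 5)) (e (2 * m + 6)) (e (2 * m + 7)) (e (2 * m + 8))
                + BTb (m + 3) e * CNt (e (2 * m + 5)) (e (2 * m + 6)) (e (2 * m + 7)) (e (2 * m + 8))
            else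
              Hb (m + 3) e * CR (e (2 * m + 5)) (e (2 * m + 6)) (e (2 * m + 7)) (e (2 * m + 8))
                + BTb (m + 3) e * CN (e (2 * m + 5)) (e (2 * m + 6)) (e (2 * m + 7)) (e (2 * m + 8))
  termination_by n _ => n
end

/-- Solution of the first-order linear recurrence `F (k+1) = P k + F k * N k`, with the
contributions `P` listed from the most recent one backwards. -/
theorem linear_recurrence_closed_form {S : Type*} [CommRing S] (F P N : ℕ → S)
    (h : ∀ k, F (k + 1) = P k + F k * N k) (k : ℕ) :
    F k = F 0 * ∏ m ∈ Finset.range k, N m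
      + ∑ i ∈ Finset.range k, P (k - 1 - i) * ∏ m ∈ Finset.range i, N (k - i + m) := by
  induction k with
  | zero => simp
  | succ k ih =>
    rw [h, ih, Finset.sum_range_succ', Finset.prod_range_succ, add_mul, Finset.sum_mul]
    have hs : ∀ i ∈ Finset.range k,
        P (k + 1 - 1 - (i + 1)) * ∏ m ∈ Finset.range (i + 1), N (k + 1 - (i + 1) + m)
          = P (k - 1 - i) * (∏ m ∈ Finset.range i, N (k - i + m)) * N k := by
      intro i hi
      have hi' := Finset.mem_range.mp hi
      rw [Finset.prod_range_succ, show k + 1 - 1 - (i + 1) = k - 1 - i by omega,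
        show k + 1 - (i + 1) + i = k by omega, show k + 1 - (i + 1) = k - i by omega]
      ring
    rw [Finset.sum_congr rfl hs]
    simp
    ring

/-- The even-index recurrence for `BT`; the separately listed value of `BT 4` obeys the same
rule as the general step, so the recurrence holds from `BT 2` on. -/
theorem BTb_even_step (e : ℕ → ℤ) (k : ℕ) :
    BTb (2 * (k + 1) + 2) e =
      (Hb (2 * k + 3) e * CX (e (4 * k + 5)) (e (4 * k + 6))
        + Hb (2 * k + 2) e
          * CR (e (4 * k + 3)) (e (4 * k + 4)) (e (4 * k + 5)) (e (4 * k + 6)))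
      + BTb (2 * k + 2) e
          * CN (e (4 * k + 3)) (e (4 * k + 4)) (e (4 * k + 5)) (e (4 * k + 6)) := by
  cases k with
  | zero =>
    rw [show 2 * (0 + 1) + 2 = 4 by norm_num, BTb]
    simp [BTb]
  | succ j =>
    rw [show 2 * (j + 1 + 1) + 2 = (2 * j + 1) + 5 by ring, BTb, if_neg (by omega)]
    rw [show 2 * j + 1 + 4 = 2 * (j + 1) + 3 by ring,
      show 2 * j + 1 + 3 = 2 * (j + 1) + 2 by ring,
      show 2 * (2 * j + 1) + 5 = 4 * (j + 1) + 3 by ring,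
      show 2 * (2 * j + 1) + 6 = 4 * (j + 1) + 4 by ring,
      show 2 * (2 * j + 1) + 7 = 4 * (j + 1) + 5 by ring,
      show 2 * (2 * j + 1) + 8 = 4 * (j + 1) + 6 by ring]
    ring

/-- Closed form for the Kauffman bracket of the bumpered billiard tables `B1(5,n)`,
even case. -/
theorem bumpered_B1_closed_form_even (n : ℕ) (hn : 4 ≤ n) (heven : n % 2 = 0)
    (e : ℕ → ℤ) (he : ∀ i, e i = 1 ∨ e i = -1) :
    BTb n e =
      Cg₂ (e 1) (e 2) *
          ∏ m ∈ Finset.range ((n - 2) / 2),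
            CN (e (4 * m + 3)) (e (4 * m + 4)) (e (4 * m + 5)) (e (4 * m + 6))
        + (∑ i ∈ Finset.range ((n - 4) / 2 + 1),
            Hb (n - 1 - 2 * i) e * CX (e (2 * n - 3 - 4 * i)) (e (2 * n - 2 - 4 * i)) *
              ∏ m ∈ Finset.range i,
                CN (e (2 * n - 1 - 4 * i + 4 * m)) (e (2 * n - 4 * i + 4 * m))
                  (e (2 * n + 1 - 4 * i + 4 * m)) (e (2 * n + 2 - 4 * i + 4 * m)))
        + ∑ i ∈ Finset.range ((n - 4) / 2 + 1),
            Hb (n - 2 - 2 * i) e *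
                CR (e (2 * n - 5 - 4 * i)) (e (2 * n - 4 - 4 * i)) (e (2 * n - 3 - 4 * i))
                  (e (2 * n - 2 - 4 * i)) *
              ∏ m ∈ Finset.range i,
                CN (e (2 * n - 1 - 4 * i + 4 * m)) (e (2 * n - 4 * i + 4 * m))
                  (e (2 * n + 1 - 4 * i + 4 * m)) (e (2 * n + 2 - 4 * i + 4 * m)) := by
  obtain ⟨k, rfl⟩ : ∃ k, n = 2 * k + 2 := ⟨(n - 2) / 2, by omega⟩
  have hmain := linear_recurrence_closed_form (fun k => BTb (2 * k + 2) e)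
    (fun k => Hb (2 * k + 3) e * CX (e (4 * k + 5)) (e (4 * k + 6))
      + Hb (2 * k + 2) e
        * CR (e (4 * k + 3)) (e (4 * k + 4)) (e (4 * k + 5)) (e (4 * k + 6)))
    (fun k => CN (e (4 * k + 3)) (e (4 * k + 4)) (e (4 * k + 5)) (e (4 * k + 6)))
    (BTb_even_step e) k
  have h0 : BTb (2 * 0 + 2) e = Cg₂ (e 1) (e 2) := by simp [BTb]
  simp only [h0] at hmain
  rw [hmain, show (2 * k + 2 - 2) / 2 = k by omega,
    show (2 * k + 2 - 4) / 2 + 1 = k by omega, add_assoc, ← Finset.sum_add_distrib]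
  refine congrArg _ (Finset.sum_congr rfl fun i hi => ?_)
  have hi' := Finset.mem_range.mp hi
  -- Writing `k = j + i + 1` makes all truncated subtractions in the indices exact.
  obtain ⟨j, rfl⟩ : ∃ j, k = j + i + 1 := ⟨k - 1 - i, by omega⟩
  rw [← add_mul]
  refine congrArg₂ (· * ·) ?_ ?_
  · rw [show j + i + 1 - 1 - i = j by omega,
      show 2 * (j + i + 1) + 2 - 1 - 2 * i = 2 * j + 3 by omega,
      show 2 * (j + i + 1) + 2 - 2 - 2 * i = 2 * j + 2 by omega,
      show 2 * (2 * (j + i + 1) + 2) - 5 - 4 * i = 4 * j + 3 by omega,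
      show 2 * (2 * (j + i + 1) + 2) - 4 - 4 * i = 4 * j + 4 by omega,
      show 2 * (2 * (j + i + 1) + 2) - 3 - 4 * i = 4 * j + 5 by omega,
      show 2 * (2 * (j + i + 1) + 2) - 2 - 4 * i = 4 * j + 6 by omega]
  · refine Finset.prod_congr rfl fun m _ => ?_
    rw [show 4 * (j + i + 1 - i + m) + 3 = 2 * (2 * (j + i + 1) + 2) - 1 - 4 * i + 4 * m by omega,
      show 4 * (j + i + 1 - i + m) + 4 = 2 * (2 * (j + i + 1) + 2) - 4 * i + 4 * m by omega,
      show 4 * (j + i + 1 - i + m) + 5 = 2 * (2 * (j + i + 1) + 2) + 1 - 4 * i + 4 * m by omega,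
      show 4 * (j + i + 1 - i + m) + 6 = 2 * (2 * (j + i + 1) + 2) + 2 - 4 * i + 4 * m by omega]

end
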